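/- arXiv:2304.09726 — 3 statements merged into one kernel-verified Lean document; each statement's English description precedes it below -/
import Mathlib

section
/- For every β > 0 and every integer n ≥ 1, ∫_{[0,2π]^n} ∏_{1≤μ<ν≤n} |e^{iθ_μ} − e^{iθ_ν}|^β dθ₁⋯dθ_n = (2π)^n Γ(1 + βn/2) / Γ(1 + β/2)^n. -/
/-!
The integrand is `V ^ k` with `k = β / 2`, where `V = ∏_{μ<ν} |e^{iθ_μ} - e^{iθ_ν}|²` is bounded and
nonnegative, so the left-hand side is the `k`-th moment of `V`. The identity is proved for integers
`k` and then transferred to all real `k ≥ 0` by uniqueness in the Hausdorff moment problem.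

For integer `k` it is Dyson's constant term identity, proved by Good's argument. For exponents
`a_i`, the integral of `∏_{i≠j} (1 - x_j/x_i)^{a_i}` over the torus is `(2π)^n` times the multinomial
coefficient of `a`: if all `a_i ≥ 1`, Lagrange interpolation shows that both sides satisfy
`F(a) = ∑_i F(a - e_i)` (`dysonProd_eq_sum`, `multinomial_eq_sum`); if some `a_j = 0`, the product is
a polynomial in `x_j`, and the mean value property removes that variable
(`integral_dysonProd_erase`).

For the transfer, the right-hand side must itself be the moment function of a bounded nonnegative
variable. By Gauss's multiplication formula `Γ(1 + kn) / Γ(1 + k)^n` is a constant times `(n^n)^k`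
times a product of quotients `Γ(j/n + k) / Γ(1 + k)`, which are, up to constants, moments of Beta
distributions (`isMomentFn_Gamma_multinomial`). By the Weierstrass approximation theorem, two
moment functions which agree on `ℕ` agree on `[0, ∞)` (`IsMomentFn.eq_of_nat`).
-/

open MeasureTheory Finset

/-! ### The Dyson product and its recursion -/

/-- The Dyson product `∏_{i ≠ j} (1 - x_j / x_i)^{a_i}` over ordered pairs from `S`. Letting `S` be a
subset of a fixed index type allows variables to be removed without changing the number of
variables of integration. -/
noncomputable def dysonProd {ι : Type*} [DecidableEq ι] (S : Finset ι) (a : ι → ℕ) (x : ι → ℂ) : ℂ :=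
  ∏ i ∈ S, ∏ j ∈ S.erase i, (1 - x j / x i) ^ a i

/-- The Lagrange basis polynomials at the nodes `1 / x i` sum to `1`; this is that identity
evaluated at `0`. -/
lemma sum_lagrange {ι : Type*} [DecidableEq ι] {S : Finset ι} (hS : S.Nonempty) {x : ι → ℂ}
    (hx : ∀ i, x i ≠ 0) (hinj : Set.InjOn x S) :
    ∑ i ∈ S, ∏ j ∈ S.erase i, (1 - x j / x i)⁻¹ = 1 := by
  have hinj' : Set.InjOn (fun i => (x i)⁻¹) S := fun i hi j hj h => hinj hi hj (inv_injective h)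
  have h := congrArg (Polynomial.eval 0) (Lagrange.sum_basis hinj' hS)
  rw [Polynomial.eval_finsetSum, Polynomial.eval_one] at h
  refine Eq.trans (Finset.sum_congr rfl fun i hi => ?_) h
  rw [Lagrange.basis, Polynomial.eval_prod]
  refine Finset.prod_congr rfl fun j hj => ?_
  have hne : x i ≠ x j := fun e =>
    (Finset.mem_erase.1 hj).1 (hinj hi (Finset.mem_erase.1 hj).2 e).symm
  have h1 := hx i
  have h2 := hx j
  have h3 : x i - x j ≠ 0 := sub_ne_zero.2 hne
  have h4 : x j - x i ≠ 0 := sub_ne_zero.2 hne.symm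
  simp only [Lagrange.basisDivisor, Polynomial.eval_mul, Polynomial.eval_C, Polynomial.eval_sub,
    Polynomial.eval_X]
  have e1 : 1 - x j / x i = (x i - x j) / x i := by field_simp
  have e2 : (x i)⁻¹ - (x j)⁻¹ = (x j - x i) / (x i * x j) := by field_simp
  rw [e1, e2, inv_div, inv_div]
  field_simp
  ring

/-- Good's recursion. It needs no distinctness of the `x i`: if two of them coincide, then every
term vanishes. -/
lemma dysonProd_eq_sum {ι : Type*} [DecidableEq ι] {S : Finset ι} (hS : S.Nonempty) {x : ι → ℂ}
    (hx : ∀ i, x i ≠ 0) (a : ι → ℕ) (ha : ∀ i ∈ S, a i ≠ 0) :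
    dysonProd S a x = ∑ i ∈ S, dysonProd S (Function.update a i (a i - 1)) x := by
  by_cases hinj : Set.InjOn x S
  · rw [← mul_one (dysonProd S a x), ← sum_lagrange hS hx hinj, Finset.mul_sum]
    refine Finset.sum_congr rfl fun i hi => ?_
    unfold dysonProd
    rw [← Finset.mul_prod_erase S _ hi, ← Finset.mul_prod_erase S _ hi]
    have e : ∏ l ∈ S.erase i, ∏ j ∈ S.erase l, (1 - x j / x l) ^ Function.update a i (a i - 1) l
        = ∏ l ∈ S.erase i, ∏ j ∈ S.erase l, (1 - x j / x l) ^ a l :=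
      Finset.prod_congr rfl fun l hl => by
        rw [Function.update_of_ne (Finset.mem_erase.1 hl).1]
    rw [e, mul_right_comm, ← Finset.prod_mul_distrib]
    congr 1
    refine Finset.prod_congr rfl fun j hj => ?_
    have hne : x i ≠ x j := fun e =>
      (Finset.mem_erase.1 hj).1 (hinj hi (Finset.mem_erase.1 hj).2 e).symm
    have h3 : 1 - x j / x i ≠ 0 := by
      rw [sub_ne_zero, ne_comm, Ne, div_eq_one_iff_eq (hx i)]
      exact hne.symm
    obtain ⟨b, hb⟩ := Nat.exists_eq_succ_of_ne_zero (ha i hi)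
    rw [Function.update_self, hb, Nat.succ_sub_one, pow_succ, mul_assoc, mul_inv_cancel₀ h3, mul_one]
  · have key : ∀ (b : ι → ℕ) (p q : ι), p ∈ S → q ∈ S → p ≠ q → x p = x q → b p ≠ 0 →
        dysonProd S b x = 0 := by
      intro b p q hp hq hpq hxe hb
      refine Finset.prod_eq_zero hp (Finset.prod_eq_zero (Finset.mem_erase.2 ⟨hpq.symm, hq⟩) ?_)
      rw [← hxe, div_self (hx p), sub_self, zero_pow hb]
    simp only [Set.InjOn, not_forall] at hinj
    obtain ⟨p, hp, q, hq, he, hpq⟩ := hinj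
    rw [key a p q hp hq hpq he (ha p hp), Finset.sum_eq_zero]
    intro i hi
    by_cases hpi : p = i
    · refine key _ q p hq hp (Ne.symm hpq) he.symm ?_
      rw [Function.update_of_ne (fun h => hpq (hpi.trans h.symm))]
      exact ha q hq
    · refine key _ p q hp hq hpq he ?_
      rw [Function.update_of_ne hpi]
      exact ha p hp

/-- A variable `x j` with exponent `a j = 0` occurs only polynomially, through a factor whose value
at `x j = 0` is `1`. -/
lemma dysonProd_erase {ι : Type*} [DecidableEq ι] {S : Finset ι} {j : ι} (hj : j ∈ S)
    (a : ι → ℕ) (ha : a j = 0) (x : ι → ℂ) :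
    dysonProd S a x = dysonProd (S.erase j) a x * ∏ i ∈ S.erase j, (1 - x j / x i) ^ a i := by
  unfold dysonProd
  rw [← Finset.mul_prod_erase S (fun i => ∏ l ∈ S.erase i, (1 - x l / x i) ^ a i) hj]
  simp only [ha, pow_zero, Finset.prod_const_one, one_mul]
  rw [← Finset.prod_mul_distrib]
  refine Finset.prod_congr rfl fun i hi => ?_
  have : j ∈ S.erase i := Finset.mem_erase.2 ⟨(Finset.mem_erase.1 hi).1.symm, hj⟩
  rw [← Finset.mul_prod_erase (S.erase i) (fun l => (1 - x l / x i) ^ a i) this, mul_comm,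
    Finset.erase_right_comm]

/-- Pascal's rule for multinomial coefficients, matching `dysonProd_eq_sum`. -/
lemma multinomial_eq_sum {ι : Type*} [DecidableEq ι] {S : Finset ι} (hS : S.Nonempty)
    (a : ι → ℕ) (ha : ∀ i ∈ S, a i ≠ 0) :
    Nat.multinomial S a = ∑ i ∈ S, Nat.multinomial S (Function.update a i (a i - 1)) := by
  have hpos : 0 < ∏ i ∈ S, (a i).factorial := Finset.prod_pos fun i _ => Nat.factorial_pos _
  apply Nat.eq_of_mul_eq_mul_left hpos
  rw [Nat.multinomial_spec, Finset.mul_sum]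
  have hterm : ∀ i ∈ S, (∏ i ∈ S, (a i).factorial) *
      Nat.multinomial S (Function.update a i (a i - 1)) = a i * (∑ i ∈ S, a i - 1).factorial := by
    intro i hi
    have h := Nat.multinomial_spec S (Function.update a i (a i - 1))
    have hs : ∑ l ∈ S, Function.update a i (a i - 1) l = ∑ l ∈ S, a l - 1 := by
      rw [Finset.sum_update_of_mem hi, ← Finset.add_sum_erase S a hi, Finset.sdiff_singleton_eq_erase]
      have := ha i hi
      omega
    rw [hs] at h
    rw [← h, ← mul_assoc]
    congr 1
    rw [← Finset.mul_prod_erase S _ hi,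
      ← Finset.mul_prod_erase S (fun l => (Function.update a i (a i - 1) l).factorial) hi,
      ← mul_assoc, Function.update_self, Nat.mul_factorial_pred (ha i hi)]
    congr 1
    refine Finset.prod_congr rfl fun l hl => by
      rw [Function.update_of_ne (Finset.mem_erase.1 hl).1]
  rw [Finset.sum_congr rfl hterm, ← Finset.sum_mul, Nat.mul_factorial_pred]
  obtain ⟨i, hi⟩ := hS
  have := Finset.single_le_sum (f := a) (fun _ _ => Nat.zero_le _) hi
  have := ha i hi
  omega

/-! ### Integration over the torus -/

/-- Lebesgue measure on `[0, 2π]`, not normalized. -/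
noncomputable def angleMeasure : Measure ℝ := volume.restrict (Set.Icc 0 (2 * Real.pi))

instance : IsFiniteMeasure angleMeasure := by
  unfold angleMeasure; infer_instance

/-- Lebesgue measure on the cube `[0, 2π]^n`, as a product measure. -/
noncomputable def torusMeasure (n : ℕ) : Measure (Fin n → ℝ) := Measure.pi fun _ => angleMeasure

instance (n : ℕ) : IsFiniteMeasure (torusMeasure n) := by
  unfold torusMeasure; infer_instance

lemma torusMeasure_eq (n : ℕ) :
    torusMeasure n = volume.restrict (Set.univ.pi fun _ => Set.Icc 0 (2 * Real.pi)) := by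
  unfold torusMeasure angleMeasure
  rw [← Measure.restrict_pi_pi]
  rfl

lemma torusMeasure_univ (n : ℕ) : (torusMeasure n).real Set.univ = (2 * Real.pi) ^ n := by
  simp [torusMeasure, Measure.real, Measure.pi_univ, angleMeasure, Real.pi_pos.le]

lemma integrable_torus {n : ℕ} {E : Type*} [NormedAddCommGroup E]
    {f : (Fin n → ℝ) → E} (hf : Continuous f) : Integrable f (torusMeasure n) := by
  rw [torusMeasure_eq]
  exact hf.continuousOn.integrableOn_compact (isCompact_univ_pi fun _ => isCompact_Icc)

/-- Fubini in the coordinate `j`: functions with the same integrals over `θ_j` have the same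
integral over the cube. -/
lemma integral_torus_congr {n : ℕ} (j : Fin n) {F G : (Fin n → ℝ) → ℂ} (hF : Continuous F)
    (hG : Continuous G)
    (h : ∀ θ, ∫ t, F (Function.update θ j t) ∂angleMeasure
      = ∫ t, G (Function.update θ j t) ∂angleMeasure) :
    ∫ θ, F θ ∂torusMeasure n = ∫ θ, G θ ∂torusMeasure n := by
  obtain _ | n := n
  · exact j.elim0
  have hmp := (measurePreserving_piFinSuccAbove (fun _ : Fin (n + 1) => angleMeasure) j).symm
  have key : ∀ H : (Fin (n + 1) → ℝ) → ℂ, Continuous H → ∫ θ, H θ ∂torusMeasure (n + 1) =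
      ∫ y, ∫ t, H (j.insertNth t y) ∂angleMeasure ∂torusMeasure n := by
    intro H hH
    have hi := integrable_torus hH
    unfold torusMeasure at hi ⊢
    rw [← hmp.integral_comp', integral_prod_symm]
    · rfl
    · exact (hmp.integrable_comp_emb (MeasurableEquiv.measurableEmbedding _)).2 hi
  rw [key F hF, key G hG]
  refine integral_congr_ae (Filter.Eventually.of_forall fun y => ?_)
  have := h (j.insertNth 0 y)
  simpa [Fin.update_insertNth] using this

/-- The mean value property of entire functions on the unit circle. -/
lemma integral_angle (Q : ℂ → ℂ) (hQ : Differentiable ℂ Q) :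
    ∫ t, Q (Complex.exp (Complex.I * (t : ℝ))) ∂angleMeasure = 2 * Real.pi * Q 0 := by
  have h := (hQ.diffContOnCl (s := Metric.ball 0 |1|)).circleAverage (c := 0) (R := 1)
  rw [Real.circleAverage, intervalIntegral.integral_of_le (by positivity),
    ← integral_Icc_eq_integral_Ioc] at h
  have hpi : (2 * Real.pi : ℝ) ≠ 0 := by positivity
  rw [inv_smul_eq_iff₀ hpi] at h
  rw [angleMeasure]
  simpa [circleMap, mul_comm Complex.I] using h

/-- The point `e^{iθ_i}` of the unit circle. -/
noncomputable def circlePt {n : ℕ} (θ : Fin n → ℝ) (i : Fin n) : ℂ :=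
  Complex.exp (Complex.I * (θ i : ℂ))

lemma circlePt_ne_zero {n : ℕ} (θ : Fin n → ℝ) (i : Fin n) : circlePt θ i ≠ 0 :=
  Complex.exp_ne_zero _

lemma continuous_dysonProd {n : ℕ} (S : Finset (Fin n)) (a : Fin n → ℕ) :
    Continuous fun θ : Fin n → ℝ => dysonProd S a (circlePt θ) := by
  unfold dysonProd
  refine continuous_finsetProd _ fun i _ => continuous_finsetProd _ fun j _ => ?_
  refine (continuous_const.sub (Continuous.div₀ ?_ ?_ fun θ => circlePt_ne_zero θ i)).pow _ <;>
  · unfold circlePt; fun_prop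

lemma integral_dysonProd_erase {n : ℕ} {S : Finset (Fin n)} {j : Fin n} (hj : j ∈ S)
    (a : Fin n → ℕ) (ha : a j = 0) :
    ∫ θ, dysonProd S a (circlePt θ) ∂torusMeasure n
      = ∫ θ, dysonProd (S.erase j) a (circlePt θ) ∂torusMeasure n := by
  refine integral_torus_congr j (continuous_dysonProd _ _) (continuous_dysonProd _ _) fun θ => ?_
  have hpt : ∀ t, ∀ i ∈ S.erase j, circlePt (Function.update θ j t) i = circlePt θ i :=
    fun t i hi => by rw [circlePt, Function.update_of_ne (Finset.mem_erase.1 hi).1, circlePt]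
  have h1 : ∀ t, dysonProd (S.erase j) a (circlePt (Function.update θ j t))
      = dysonProd (S.erase j) a (circlePt θ) := fun t =>
    Finset.prod_congr rfl fun i hi => Finset.prod_congr rfl fun l hl => by
      rw [hpt t i hi, hpt t l (Finset.mem_of_mem_erase hl)]
  have h2 : ∀ t, dysonProd S a (circlePt (Function.update θ j t))
      = dysonProd (S.erase j) a (circlePt θ) *
        (fun z => ∏ i ∈ S.erase j, (1 - z / circlePt θ i) ^ a i)
          (Complex.exp (Complex.I * (t : ℝ))) := fun t => by
    rw [dysonProd_erase hj a ha, h1]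
    congr 1
    refine Finset.prod_congr rfl fun i hi => ?_
    rw [hpt t i hi, circlePt, Function.update_self]
  have h3 : ∫ _, (1:ℂ) ∂angleMeasure = 2 * Real.pi := by
    simpa using integral_angle (fun _ => 1) (differentiable_const _)
  have h4 := integral_angle (fun z => ∏ i ∈ S.erase j, (1 - z / circlePt θ i) ^ a i) (by fun_prop)
  simp_rw [h1, h2]
  rw [integral_const_mul, h4, ← mul_one (dysonProd (S.erase j) a _),
    integral_const_mul, h3]
  simp

/-- The analytic form of Dyson's constant term identity. -/
theorem integral_dysonProd {n : ℕ} (S : Finset (Fin n)) (a : Fin n → ℕ) :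
    ∫ θ, dysonProd S a (circlePt θ) ∂torusMeasure n
      = (2 * Real.pi) ^ n * (Nat.multinomial S a : ℂ) := by
  induction hN : S.card + ∑ i ∈ S, a i using Nat.strong_induction_on generalizing S a with
  | _ N ih =>
  subst hN
  rcases S.eq_empty_or_nonempty with rfl | hS
  · simp only [dysonProd, Finset.prod_empty, integral_const, torusMeasure_univ]
    simp
  by_cases h : ∃ j ∈ S, a j = 0
  · obtain ⟨j, hj, haj⟩ := h
    have hsum := Finset.add_sum_erase S a hj
    have hcard := Finset.card_erase_add_one hj
    rw [integral_dysonProd_erase hj a haj, ih _ (by omega) _ _ rfl]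
    congr 2
    conv_rhs => rw [← Finset.insert_erase hj, Nat.multinomial_insert (Finset.notMem_erase j S)]
    simp [haj]
  · push Not at h
    simp_rw [dysonProd_eq_sum hS (circlePt_ne_zero _) a h]
    rw [integral_finsetSum _ fun i _ => integrable_torus (continuous_dysonProd _ _),
      multinomial_eq_sum hS a h, Nat.cast_sum, Finset.mul_sum]
    refine Finset.sum_congr rfl fun i hi => ih _ ?_ _ _ rfl
    rw [Finset.sum_update_of_mem hi, ← Finset.add_sum_erase S a hi,
      Finset.sdiff_singleton_eq_erase]
    have := h i hi
    omega

/-- The squared modulus `∏_{μ<ν} |e^{iθ_μ} - e^{iθ_ν}|²` of the Vandermonde determinant. -/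
noncomputable def vandermondeSq {n : ℕ} (θ : Fin n → ℝ) : ℝ :=
  ∏ p ∈ Finset.univ.filter (fun p : Fin n × Fin n => p.1 < p.2),
    ‖circlePt θ p.1 - circlePt θ p.2‖ ^ 2

/-- On the unit circle the factors for `(μ, ν)` and `(ν, μ)` are complex conjugates. -/
lemma dysonProd_univ_eq {n : ℕ} (k : ℕ) (θ : Fin n → ℝ) :
    dysonProd Finset.univ (fun _ => k) (circlePt θ) =
      ((vandermondeSq θ ^ k : ℝ) : ℂ) := by
  have hfac : ∀ p q : Fin n, (1 - circlePt θ q / circlePt θ p) * (1 - circlePt θ p / circlePt θ q)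
      = ((‖circlePt θ p - circlePt θ q‖ ^ 2 : ℝ) : ℂ) := by
    intro p q
    have hconj : ∀ i, (starRingEnd ℂ) (circlePt θ i) = (circlePt θ i)⁻¹ := by
      intro i
      simp [circlePt, ← Complex.exp_conj, ← Complex.exp_neg]
    push_cast
    rw [← Complex.mul_conj', map_sub, hconj, hconj]
    have := circlePt_ne_zero θ p
    have := circlePt_ne_zero θ q
    field_simp
  have h := Finset.prod_prod_Ioi_mul_eq_prod_prod_off_diag
    (fun q p : Fin n => (1 - circlePt θ q / circlePt θ p) ^ k)
  unfold dysonProd vandermondeSq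
  simp_rw [← Finset.compl_singleton]
  rw [← h]
  simp_rw [← mul_pow, hfac]
  rw [← Finset.prod_pow]
  push_cast
  rw [Finset.prod_filter, ← Finset.univ_product_univ, Finset.prod_product]
  refine Finset.prod_congr rfl fun i _ => ?_
  rw [← Finset.prod_filter, ← Finset.filter_lt_eq_Ioi]

theorem integral_vandermondeSq_pow (n k : ℕ) :
    ∫ θ, vandermondeSq θ ^ k ∂torusMeasure n
      = (2 * Real.pi) ^ n * ((n * k).factorial / (k.factorial : ℝ) ^ n) := by
  have h := integral_dysonProd (n := n) Finset.univ (fun _ => k)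
  simp_rw [dysonProd_univ_eq] at h
  rw [integral_complex_ofReal] at h
  have hm : (Nat.multinomial (Finset.univ : Finset (Fin n)) (fun _ => k) : ℝ)
      = (n * k).factorial / (k.factorial : ℝ) ^ n := by
    have := Nat.multinomial_spec (Finset.univ : Finset (Fin n)) (fun _ => k)
    simp only [Finset.prod_const, Finset.sum_const, Finset.card_univ, Fintype.card_fin,
      smul_eq_mul] at this
    rw [eq_div_iff (by positivity), mul_comm, ← this]
    push_cast
    rfl
  rw [← hm]
  exact_mod_cast h

/-! ### Moment functions of bounded nonnegative variables -/

/-- `φ` is, on `[0, ∞)`, the function `k ↦ ∫ x^k dμ` of real moments of a finite measure `μ`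
concentrated on a bounded interval `[0, M]`. Values of `φ` at negative arguments are irrelevant. -/
def IsMomentFn (φ : ℝ → ℝ) : Prop :=
  ∃ (μ : Measure ℝ) (M : ℝ), IsFiniteMeasure μ ∧ 0 ≤ M ∧ (∀ᵐ x ∂μ, x ∈ Set.Icc 0 M) ∧
    ∀ k : ℝ, 0 ≤ k → ∫ x, x ^ k ∂μ = φ k

lemma IsMomentFn.congr {φ ψ : ℝ → ℝ} (hφ : IsMomentFn φ) (h : ∀ k, 0 ≤ k → φ k = ψ k) :
    IsMomentFn ψ := by
  obtain ⟨μ, M, h1, h2, h3, h4⟩ := hφ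
  exact ⟨μ, M, h1, h2, h3, fun k hk => (h4 k hk).trans (h k hk)⟩

lemma integrable_of_bdd {μ : Measure ℝ} [IsFiniteMeasure μ] {M : ℝ}
    (hμ : ∀ᵐ x ∂μ, x ∈ Set.Icc 0 M) {f : ℝ → ℝ} (hf : ContinuousOn f (Set.Icc 0 M)) :
    Integrable f μ := by
  rw [← Measure.restrict_eq_self_of_ae_mem hμ]
  exact hf.integrableOn_compact isCompact_Icc

/-- Uniqueness in the Hausdorff moment problem: the integer moments determine the real ones, since
`x ^ k` is a uniform limit of polynomials on a bounded interval. -/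
lemma IsMomentFn.eq_of_nat {φ ψ : ℝ → ℝ} (hφ : IsMomentFn φ) (hψ : IsMomentFn ψ)
    (h : ∀ k : ℕ, φ k = ψ k) {k : ℝ} (hk : 0 ≤ k) : φ k = ψ k := by
  obtain ⟨μ, M₁, hfin₁, -, hae₁, hmom₁⟩ := hφ
  obtain ⟨ν, M₂, hfin₂, -, hae₂, hmom₂⟩ := hψ
  set M := max M₁ M₂ with hM
  replace hae₁ : ∀ᵐ x ∂μ, x ∈ Set.Icc 0 M := by
    filter_upwards [hae₁] with x hx using ⟨hx.1, hx.2.trans (le_max_left _ _)⟩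
  replace hae₂ : ∀ᵐ x ∂ν, x ∈ Set.Icc 0 M := by
    filter_upwards [hae₂] with x hx using ⟨hx.1, hx.2.trans (le_max_right _ _)⟩
  have hpoly : ∀ p : Polynomial ℝ, ∫ x, p.eval x ∂μ = ∫ x, p.eval x ∂ν := by
    intro p
    simp_rw [Polynomial.eval_eq_sum_range]
    rw [integral_finsetSum _ fun i _ => integrable_of_bdd hae₁ (by fun_prop),
      integral_finsetSum _ fun i _ => integrable_of_bdd hae₂ (by fun_prop)]
    refine Finset.sum_congr rfl fun i _ => ?_
    rw [integral_const_mul, integral_const_mul]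
    have h1 := hmom₁ i (Nat.cast_nonneg i)
    have h2 := hmom₂ i (Nat.cast_nonneg i)
    simp_rw [Real.rpow_natCast] at h1 h2
    rw [h1, h2, h i]
  have hcont : ContinuousOn (fun x : ℝ => x ^ k) (Set.Icc 0 M) :=
    (Real.continuous_rpow_const hk).continuousOn
  rw [← hmom₁ k hk, ← hmom₂ k hk]
  have happrox : ∀ (ρ : Measure ℝ) [IsFiniteMeasure ρ], (∀ᵐ x ∂ρ, x ∈ Set.Icc 0 M) →
      ∀ (p : Polynomial ℝ) (ε : ℝ), (∀ x ∈ Set.Icc 0 M, |p.eval x - x ^ k| < ε) →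
      |∫ x, p.eval x ∂ρ - ∫ x, x ^ k ∂ρ| ≤ ε * ρ.real Set.univ := by
    intro ρ _ hρ p ε hp
    rw [← integral_sub (integrable_of_bdd hρ (by fun_prop)) (integrable_of_bdd hρ hcont)]
    have hb : ∀ᵐ x ∂ρ, ‖p.eval x - x ^ k‖ ≤ ε := by
      filter_upwards [hρ] with x hx using (hp x hx).le
    exact norm_integral_le_of_norm_le_const hb
  have hle : ∀ ε : ℝ, 0 < ε → |∫ x, x ^ k ∂μ - ∫ x, x ^ k ∂ν| ≤
      ε * (μ.real Set.univ + ν.real Set.univ) := by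
    intro ε hε
    obtain ⟨p, hp⟩ := exists_polynomial_near_of_continuousOn 0 M _ hcont ε hε
    have h1 := happrox μ hae₁ p ε hp
    have h2 := happrox ν hae₂ p ε hp
    rw [hpoly p] at h1
    rw [abs_le] at *
    constructor <;> linarith [h1.1, h1.2, h2.1, h2.2]
  have hC : 0 ≤ μ.real Set.univ + ν.real Set.univ := by positivity
  by_contra hne
  have hpos : 0 < |∫ x, x ^ k ∂μ - ∫ x, x ^ k ∂ν| := abs_pos.2 (sub_ne_zero.2 hne)
  have := hle (|∫ x, x ^ k ∂μ - ∫ x, x ^ k ∂ν| / (μ.real Set.univ + ν.real Set.univ + 1))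
    (by positivity)
  rw [div_mul_eq_mul_div, le_div_iff₀ (by positivity)] at this
  nlinarith

/-- A product of moment functions is the moment function of the product of independent variables,
that is, of the multiplicative convolution of the measures. -/
lemma IsMomentFn.mul {φ ψ : ℝ → ℝ} (hφ : IsMomentFn φ) (hψ : IsMomentFn ψ) :
    IsMomentFn fun k => φ k * ψ k := by
  obtain ⟨μ, M₁, hfin₁, hM₁, hae₁, hmom₁⟩ := hφ
  obtain ⟨ν, M₂, hfin₂, hM₂, hae₂, hmom₂⟩ := hψ
  have hm : Measurable fun p : ℝ × ℝ => p.1 * p.2 := by fun_prop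
  have h1 : ∀ᵐ p ∂μ.prod ν, p.1 ∈ Set.Icc 0 M₁ := Measure.quasiMeasurePreserving_fst.ae hae₁
  have h2 : ∀ᵐ p ∂μ.prod ν, p.2 ∈ Set.Icc 0 M₂ := Measure.quasiMeasurePreserving_snd.ae hae₂
  refine ⟨(μ.prod ν).map fun p => p.1 * p.2, M₁ * M₂, inferInstance, by positivity, ?_, ?_⟩
  · refine (ae_map_iff hm.aemeasurable measurableSet_Icc).2 ?_
    filter_upwards [h1, h2] with p hp hq
    exact ⟨mul_nonneg hp.1 hq.1, mul_le_mul hp.2 hq.2 hq.1 hM₁⟩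
  · intro k hk
    beta_reduce
    rw [integral_map hm.aemeasurable (by fun_prop), ← hmom₁ k hk, ← hmom₂ k hk,
      ← integral_prod_mul]
    refine integral_congr_ae ?_
    filter_upwards [h1, h2] with p hp hq
    exact Real.mul_rpow hp.1 hq.1

lemma isMomentFn_const_mul_rpow {c b : ℝ} (hc : 0 ≤ c) (hb : 0 ≤ b) :
    IsMomentFn fun k => c * b ^ k := by
  refine ⟨ENNReal.ofReal c • Measure.dirac b, b, ?_, hb, ?_, ?_⟩
  · exact Measure.smul_finite _ ENNReal.ofReal_ne_top
  · refine Measure.ae_smul_measure ?_ _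
    exact (ae_dirac_iff measurableSet_Icc).2 ⟨hb, le_rfl⟩
  · intro k _
    simp [integral_smul_measure, hc]

lemma IsMomentFn.prod {ι : Type*} (s : Finset ι) (φ : ι → ℝ → ℝ)
    (h : ∀ i ∈ s, IsMomentFn (φ i)) : IsMomentFn fun k => ∏ i ∈ s, φ i k := by
  classical
  induction s using Finset.induction_on with
  | empty => simpa using isMomentFn_const_mul_rpow zero_le_one zero_le_one
  | insert i s hi ih =>
    simp_rw [Finset.prod_insert hi]
    exact (h i (Finset.mem_insert_self i s)).mul
      (ih fun j hj => h j (Finset.mem_insert_of_mem hj))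

lemma integral_betaPDFReal {a b : ℝ} (ha : 0 < a) (hb : 0 < b) :
    ∫ x, ProbabilityTheory.betaPDFReal a b x = 1 := by
  rw [integral_eq_lintegral_of_nonneg_ae]
  · have := ProbabilityTheory.lintegral_betaPDF_eq_one ha hb
    simp only [ProbabilityTheory.betaPDF] at this
    rw [this, ENNReal.toReal_one]
  · refine Filter.Eventually.of_forall fun x => ?_
    by_cases hx : 0 < x ∧ x < 1
    · exact (ProbabilityTheory.betaPDFReal_pos hx.1 hx.2 ha hb).le
    · simp [ProbabilityTheory.betaPDFReal, hx]
  · exact (ProbabilityTheory.measurable_betaPDFReal a b).aestronglyMeasurable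

/-! ### The Gamma quotient as a moment function -/

/-- For `a < 1` this is, up to a constant, the moment function of the Beta distribution with
parameters `a` and `1 - a`. -/
lemma isMomentFn_Gamma_ratio {a : ℝ} (ha : 0 < a) (ha1 : a ≤ 1) :
    IsMomentFn fun k => Real.Gamma (a + k) / Real.Gamma (1 + k) := by
  rcases ha1.eq_or_lt with rfl | ha1
  · refine (isMomentFn_const_mul_rpow zero_le_one zero_le_one).congr fun k hk => ?_
    rw [div_self (Real.Gamma_pos_of_pos (by linarith)).ne']
    simp
  have hb : 0 < 1 - a := by linarith
  have hB : IsMomentFn fun k => ProbabilityTheory.beta (a + k) (1 - a) /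
      ProbabilityTheory.beta a (1 - a) := by
    have := ProbabilityTheory.isProbabilityMeasureBeta ha hb
    have hmeas : Measurable (ProbabilityTheory.betaPDF a (1 - a)) :=
      (ProbabilityTheory.measurable_betaPDFReal a (1 - a)).ennreal_ofReal
    refine ⟨ProbabilityTheory.betaMeasure a (1 - a), 1, inferInstance, zero_le_one, ?_, ?_⟩
    · rw [ProbabilityTheory.betaMeasure, ae_withDensity_iff hmeas]
      refine Filter.Eventually.of_forall fun x hx => ?_
      by_contra hx'
      rw [Set.mem_Icc, not_and_or, not_le, not_le] at hx'
      rcases hx' with h | h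
      · exact hx (ProbabilityTheory.betaPDF_eq_zero_of_nonpos h.le)
      · exact hx (ProbabilityTheory.betaPDF_eq_zero_of_one_le h.le)
    · intro k hk
      rw [ProbabilityTheory.betaMeasure, integral_withDensity_eq_integral_toReal_smul hmeas
        (Filter.Eventually.of_forall fun x => by simp [ProbabilityTheory.betaPDF])]
      have hak : 0 < a + k := by linarith
      have hpt : ∀ x : ℝ, (ProbabilityTheory.betaPDF a (1 - a) x).toReal • x ^ k =
          (ProbabilityTheory.beta (a + k) (1 - a) / ProbabilityTheory.beta a (1 - a)) *
            ProbabilityTheory.betaPDFReal (a + k) (1 - a) x := by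
        intro x
        by_cases hx : 0 < x ∧ x < 1
        · have h1 := (ProbabilityTheory.beta_pos ha hb).ne'
          have h2 := (ProbabilityTheory.beta_pos hak hb).ne'
          rw [ProbabilityTheory.betaPDF, ENNReal.toReal_ofReal
            (ProbabilityTheory.betaPDFReal_pos hx.1 hx.2 ha hb).le, ProbabilityTheory.betaPDFReal,
            ProbabilityTheory.betaPDFReal, if_pos hx, if_pos hx,
            show a + k - 1 = (a - 1) + k by ring, Real.rpow_add hx.1, smul_eq_mul]
          field_simp
        · simp [ProbabilityTheory.betaPDF, ProbabilityTheory.betaPDFReal, hx]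
      simp_rw [hpt]
      rw [integral_const_mul, integral_betaPDFReal hak hb, mul_one]
  refine (hB.mul (isMomentFn_const_mul_rpow (Real.Gamma_pos_of_pos ha).le zero_le_one)).congr
    fun k hk => ?_
  rw [ProbabilityTheory.beta, ProbabilityTheory.beta]
  have g1 := (Real.Gamma_pos_of_pos ha).ne'
  have g2 := (Real.Gamma_pos_of_pos hb).ne'
  have g3 := (Real.Gamma_pos_of_pos (show 0 < 1 + k by linarith)).ne'
  rw [show a + (1 - a) = 1 by ring, show a + k + (1 - a) = 1 + k by ring, Real.Gamma_one,
    Real.one_rpow]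
  field_simp

/-- Gauss's multiplication formula with an unspecified constant `C`, from the Bohr-Mollerup
theorem. -/
theorem exists_Gamma_mul_formula (n : ℕ) (hn : 1 ≤ n) :
    ∃ C : ℝ, 0 < C ∧ ∀ s : ℝ, 0 < s →
      Real.Gamma s = C * (n : ℝ) ^ s * ∏ j ∈ Finset.range n, Real.Gamma ((s + j) / n) := by
  have hn0 : (0:ℝ) < n := by exact_mod_cast hn
  set P : ℝ → ℝ := fun s => (n : ℝ) ^ s * ∏ j ∈ Finset.range n, Real.Gamma ((s + j) / n) with hP
  have hpos : ∀ s : ℝ, 0 < s → 0 < P s := fun s hs =>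
    mul_pos (Real.rpow_pos_of_pos hn0 s)
      (Finset.prod_pos fun j _ => Real.Gamma_pos_of_pos (by positivity))
  have hP1 := hpos 1 one_pos
  have hrec : ∀ s : ℝ, 0 < s → P (s + 1) = s * P s := by
    intro s hs
    -- Passing from `s` to `s + 1` shifts the arguments `(s + j) / n` cyclically, except that `s / n`
    -- is replaced by `s / n + 1`.
    obtain ⟨m, rfl⟩ : ∃ m, n = m + 1 := ⟨n - 1, by omega⟩
    simp only [hP]
    rw [Real.rpow_add_one hn0.ne', Finset.prod_range_succ, Finset.prod_range_succ' (n := m)]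
    have e1 : (s + 1 + m) / ((m + 1 : ℕ) : ℝ) = s / ((m + 1 : ℕ) : ℝ) + 1 := by
      push_cast at hn0 ⊢
      field_simp
      ring
    have e2 : ∀ j : ℕ, s + ((j + 1 : ℕ) : ℝ) = s + 1 + j := fun j => by push_cast; ring
    rw [e1, Real.Gamma_add_one (div_pos hs hn0).ne']
    simp_rw [e2]
    simp only [Nat.cast_zero, add_zero]
    field_simp
  have hlog : ∀ s : ℝ, 0 < s → Real.log (P s / P 1) =
      ∑ j ∈ Finset.range n, Real.log (Real.Gamma ((s + j) / n)) + s * Real.log n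
        + -Real.log (P 1) := by
    intro s hs
    have h1 : ∀ j ∈ Finset.range n, Real.Gamma ((s + j) / n) ≠ 0 := fun j _ =>
      (Real.Gamma_pos_of_pos (by positivity)).ne'
    rw [Real.log_div (hpos s hs).ne' hP1.ne']
    simp only [hP]
    rw [Real.log_mul (Real.rpow_pos_of_pos hn0 s).ne' (Finset.prod_ne_zero_iff.2 h1),
      Real.log_rpow hn0, Real.log_prod h1]
    ring
  have hconv : ConvexOn ℝ (Set.Ioi 0) (Real.log ∘ fun s => P s / P 1) := by
    refine ⟨convex_Ioi 0, ?_⟩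
    intro x hx y hy a b ha hb hab
    have hxy := convex_Ioi (0:ℝ) hx hy ha hb hab
    simp only [Function.comp_apply, smul_eq_mul] at hxy ⊢
    rw [hlog x hx, hlog y hy, hlog _ hxy]
    have hterm : ∀ j ∈ Finset.range n, Real.log (Real.Gamma ((a * x + b * y + j) / n)) ≤
        a * Real.log (Real.Gamma ((x + j) / n)) + b * Real.log (Real.Gamma ((y + j) / n)) := by
      intro j _
      have hx0 : (0:ℝ) < x := hx
      have hy0 : (0:ℝ) < y := hy
      have h := Real.convexOn_log_Gamma.2 (x := (x + j) / n) (y := (y + j) / n)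
        (Set.mem_Ioi.2 (by positivity)) (Set.mem_Ioi.2 (by positivity)) ha hb hab
      simp only [Function.comp_apply, smul_eq_mul] at h
      have e : (a * x + b * y + j) / n = a * ((x + j) / n) + b * ((y + j) / n) := by
        field_simp
        linear_combination (-(j:ℝ)) * hab
      rw [e]
      exact h
    have hs := Finset.sum_le_sum hterm
    rw [Finset.sum_add_distrib, ← Finset.mul_sum, ← Finset.mul_sum] at hs
    have e3 : Real.log (P 1) = a * Real.log (P 1) + b * Real.log (P 1) := by
      rw [← add_mul, hab, one_mul]
    linarith
  have hG := Real.eq_Gamma_of_log_convex hconv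
    (fun {y} hy => by rw [hrec y hy, mul_div_assoc]) (fun {y} hy => div_pos (hpos y hy) hP1)
    (div_self hP1.ne')
  refine ⟨(P 1)⁻¹, inv_pos.2 hP1, fun s hs => ?_⟩
  rw [← hG hs, mul_assoc]
  exact div_eq_inv_mul _ _

/-- By Gauss's multiplication formula the quotient `Γ(1 + kn) / Γ(1 + k)^n` is `C n (n^n)^k` times
the product of the `Γ((j + 1)/n + k) / Γ(1 + k)` over `j < n`. -/
lemma isMomentFn_Gamma_multinomial (n : ℕ) (hn : 1 ≤ n) :
    IsMomentFn fun k => (2 * Real.pi) ^ n * (Real.Gamma (1 + k * n) / Real.Gamma (1 + k) ^ n) := by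
  obtain ⟨C, hC, hG⟩ := exists_Gamma_mul_formula n hn
  have hn0 : (0:ℝ) < n := by exact_mod_cast hn
  have hprod := (isMomentFn_const_mul_rpow
    (c := (2 * Real.pi) ^ n * (C * n)) (b := (n : ℝ) ^ n) (by positivity) (by positivity)).mul
    (IsMomentFn.prod (Finset.range n)
      (fun j k => Real.Gamma (((j : ℝ) + 1) / n + k) / Real.Gamma (1 + k)) fun j hj =>
      isMomentFn_Gamma_ratio (by positivity) (by
        rw [div_le_one hn0]
        exact_mod_cast Finset.mem_range.1 hj))
  refine hprod.congr fun k hk => ?_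
  have e : ∀ j : ℕ, (1 + k * n + j) / n = ((j : ℝ) + 1) / n + k := fun j => by
    field_simp
    ring
  rw [hG (1 + k * n) (by positivity), Finset.prod_div_distrib, Finset.prod_const,
    Finset.card_range]
  simp_rw [e]
  rw [Real.rpow_add hn0, Real.rpow_one, mul_comm k, Real.rpow_mul hn0.le, Real.rpow_natCast]
  ring

/-! ### The circular ensemble for real `β` -/

lemma continuous_vandermondeSq (n : ℕ) :
    Continuous fun θ : Fin n → ℝ => vandermondeSq θ := by
  unfold vandermondeSq circlePt
  fun_prop

lemma vandermondeSq_nonneg {n : ℕ} (θ : Fin n → ℝ) : 0 ≤ vandermondeSq θ :=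
  Finset.prod_nonneg fun _ _ => sq_nonneg _

/-- Each factor is at most `2 ^ 2`. -/
lemma vandermondeSq_le {n : ℕ} (θ : Fin n → ℝ) :
    vandermondeSq θ ≤ ∏ _p ∈ Finset.univ.filter (fun p : Fin n × Fin n => p.1 < p.2), (2 : ℝ) ^ 2 := by
  refine Finset.prod_le_prod (fun _ _ => sq_nonneg _) fun p _ => ?_
  have h : ∀ i, ‖circlePt θ i‖ = 1 := fun i => by
    rw [circlePt, mul_comm, Complex.norm_exp_ofReal_mul_I]
  have := norm_sub_le (circlePt θ p.1) (circlePt θ p.2)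
  rw [h, h] at this
  exact pow_le_pow_left₀ (norm_nonneg _) (by linarith) 2

lemma isMomentFn_vandermondeSq (n : ℕ) :
    IsMomentFn fun k => ∫ θ, vandermondeSq θ ^ k ∂torusMeasure n := by
  have hm := (continuous_vandermondeSq n).measurable
  refine ⟨(torusMeasure n).map vandermondeSq, _, inferInstance,
    (vandermondeSq_nonneg 0).trans (vandermondeSq_le (n := n) 0), ?_, fun k _ => ?_⟩
  · exact (ae_map_iff hm.aemeasurable measurableSet_Icc).2
      (Filter.Eventually.of_forall fun θ => ⟨vandermondeSq_nonneg θ, vandermondeSq_le θ⟩)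
  · exact integral_map hm.aemeasurable (by fun_prop)

/-- Selberg's integral for the circular β-ensemble: the partition function on the unit circle is
`(2π)^n Γ(1 + βn/2) / Γ(1 + β/2)^n`. -/
theorem partition_function_circle (β : ℝ) (hβ : 0 < β) (n : ℕ) (hn : 1 ≤ n) :
    (∫ θ in Set.univ.pi fun _ : Fin n => Set.Icc (0:ℝ) (2 * Real.pi),
      ∏ p ∈ Finset.univ.filter (fun p : Fin n × Fin n => p.1 < p.2),
        ‖Complex.exp (Complex.I * (θ p.1 : ℂ)) - Complex.exp (Complex.I * (θ p.2 : ℂ))‖ ^ β)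
    = (2 * Real.pi) ^ n * Real.Gamma (1 + β * n / 2) / Real.Gamma (1 + β / 2) ^ n := by
  have hnat : ∀ k : ℕ, ∫ θ, vandermondeSq θ ^ (k : ℝ) ∂torusMeasure n =
      (2 * Real.pi) ^ n * (Real.Gamma (1 + k * n) / Real.Gamma (1 + k) ^ n) := by
    intro k
    simp_rw [Real.rpow_natCast]
    have h1 := Real.Gamma_nat_eq_factorial k
    have h2 := Real.Gamma_nat_eq_factorial (n * k)
    push_cast at h2
    rw [integral_vandermondeSq_pow, ← h1, ← h2, add_comm (k : ℝ), add_comm _ (1 : ℝ),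
      mul_comm (n : ℝ)]
  have h := (isMomentFn_vandermondeSq n).eq_of_nat (isMomentFn_Gamma_multinomial n hn) hnat
    (k := β / 2) (by positivity)
  beta_reduce at h
  rw [← torusMeasure_eq, mul_div_assoc, show β * n / 2 = β / 2 * n by ring, ← h]
  refine integral_congr_ae (Filter.Eventually.of_forall fun θ => ?_)
  beta_reduce
  rw [vandermondeSq, ← Real.finsetProd_rpow _ _ fun _ _ => sq_nonneg _]
  refine Finset.prod_congr rfl fun p _ => ?_
  rw [← Real.rpow_natCast, ← Real.rpow_mul (norm_nonneg _), circlePt, circlePt]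
  congr 1
  push_cast
  ring
end

section
/- For every integer n ≥ 1, ∑_{k=1}^{n-1} 1/sin²(πk/n) = (n² − 1)/3. -/
open Finset

/-!
Write `n = m + 1`. The numbers `x_k = cos (kπ/n)`, `1 ≤ k ≤ m`, are exactly the roots of the
Chebyshev polynomial `U_m`, so the logarithmic derivative of `U_m` at `1` gives
`∑ 1 / (1 - x_k) = U_m'(1) / U_m(1) = (n² - 1) / 3`. The roots are symmetric under `x ↦ -x`
(that is, `k ↦ n - k`), so `∑ 1 / (1 + x_k)` has the same value. Finally
`1 / sin² = 1 / (1 - cos²) = (1 / (1 - cos) + 1 / (1 + cos)) / 2`.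
-/

open Polynomial in
/-- The logarithmic derivative of the Chebyshev polynomial `U_m` at `1`. -/
lemma sum_inv_one_sub_cos (m : ℕ) :
    ∑ k ∈ range m, 1 / (1 - Real.cos ((k + 1) * Real.pi / (m + 1)))
      = (((m : ℝ) + 1) ^ 2 - 1) / 3 := by
  have hroots : (Chebyshev.U ℝ m).roots =
      (Multiset.range m).map (fun k : ℕ ↦ Real.cos ((k + 1) * Real.pi / (m + 1))) := by
    rw [Chebyshev.roots_U_real, image_val]
    exact (Chebyshev.roots_U_real_nodup m).dedup
  have hsplits : (Chebyshev.U ℝ m).Splits := by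
    rw [splits_iff_card_roots, hroots, Chebyshev.natDegree_U_natCast]
    simp
  have hone : (Chebyshev.U ℝ m).eval 1 = (m : ℝ) + 1 := by
    simp
  have hpos : (m : ℝ) + 1 ≠ 0 := by positivity
  have h := hsplits.eval_derivative_div_eval_of_ne_zero (x := 1) (by rwa [hone])
  rw [hroots, Multiset.map_map, hone, Chebyshev.derivative_U_eval_one_eq_div] at h
  refine Eq.trans h.symm ?_
  push_cast
  field_simp
  ring

/-- The reflection `k ↦ m - 1 - k` of `range m` changes the sign of every cosine. -/
lemma sum_inv_one_add_cos (m : ℕ) :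
    ∑ k ∈ range m, 1 / (1 + Real.cos ((k + 1) * Real.pi / (m + 1)))
      = (((m : ℝ) + 1) ^ 2 - 1) / 3 := by
  rw [← sum_inv_one_sub_cos, ← sum_range_reflect]
  refine sum_congr rfl fun k hk ↦ ?_
  have hk' : k + 1 ≤ m := mem_range.mp hk
  have hcast : ((m - 1 - k : ℕ) : ℝ) = m - 1 - k := by
    rw [Nat.sub_sub, Nat.cast_sub (by omega)]
    push_cast
    ring
  have hangle : ((m - 1 - k : ℕ) + 1) * Real.pi / ((m : ℝ) + 1)
      = Real.pi - (k + 1) * Real.pi / (m + 1) := by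
    rw [hcast]
    field_simp
    ring
  rw [hangle, Real.cos_pi_sub, sub_eq_add_neg]

/-- `∑_{k=1}^{n-1} 1 / sin²(πk/n) = (n² - 1)/3`. -/
theorem sum_inv_sin_sq (n : ℕ) (hn : 1 ≤ n) :
    ∑ k ∈ Finset.Icc 1 (n - 1), 1 / Real.sin (Real.pi * k / n) ^ 2
      = ((n : ℝ) ^ 2 - 1) / 3 := by
  obtain ⟨m, rfl⟩ : ∃ m, n = m + 1 := ⟨n - 1, by omega⟩
  have hsum : ∑ k ∈ Icc 1 (m + 1 - 1), 1 / Real.sin (Real.pi * k / (m + 1 : ℕ)) ^ 2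
      = ∑ k ∈ range m, (1 / (1 - Real.cos ((k + 1) * Real.pi / (m + 1)))
          + 1 / (1 + Real.cos ((k + 1) * Real.pi / (m + 1)))) / 2 := by
    have hIcc : Icc 1 (m + 1 - 1) = Ico (0 + 1) (m + 1) := by
      ext
      simp
    rw [hIcc, range_eq_Ico, ← sum_Ico_add']
    refine sum_congr rfl fun k hk ↦ ?_
    have hkm : (k : ℝ) < m := by exact_mod_cast (mem_Ico.mp hk).2
    push_cast
    rw [mul_comm Real.pi]
    set θ : ℝ := (k + 1) * Real.pi / (m + 1) with hθ
    have hθ0 : 0 < θ := by positivity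
    have hθπ : θ < Real.pi := by
      rw [hθ, div_lt_iff₀ (by positivity), mul_comm]
      exact mul_lt_mul_of_pos_left (by linarith) Real.pi_pos
    have hsin : 0 < Real.sin θ := Real.sin_pos_of_pos_of_lt_pi hθ0 hθπ
    have hprod : Real.sin θ ^ 2 = (1 - Real.cos θ) * (1 + Real.cos θ) := by
      rw [Real.sin_sq]
      ring
    have hne : (1 - Real.cos θ) * (1 + Real.cos θ) ≠ 0 := hprod ▸ (pow_pos hsin 2).ne'
    have h1 := left_ne_zero_of_mul hne
    have h2 := right_ne_zero_of_mul hne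
    rw [hprod]
    field_simp
    ring
  rw [hsum, ← sum_div, sum_add_distrib, sum_inv_one_sub_cos, sum_inv_one_add_cos]
  push_cast
  ring
end

section
/- For every integer k ≥ 1 and all real numbers x, y with e^{ix} ≠ e^{iy}, cot((x−y)/2) · (e^{ikx} − e^{iky}) = i ( e^{ikx} + e^{iky} + 2 ∑_{j=1}^{k-1} e^{i(jx + (k−j)y)} ), where the sum is empty when k = 1. -/
/-!
With `a = e^{ix}` and `b = e^{iy}`, the cotangent is `cot ((x - y) / 2) = i (a + b) / (a - b)`
(`cot_half_sub_mul`), and the sum telescopes to `(a - b) ∑_{0 < j < k} a^j b^(k-j) = a^k b - a b^k`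
(`sub_mul_sum_Ico`). After multiplication by `a - b ≠ 0` the claim is therefore the polynomial
identity `(a + b) (a^k - b^k) = (a - b) (a^k + b^k) + 2 (a^k b - a b^k)`.
-/

open Finset

theorem sub_mul_sum_Ico (a b : ℂ) (k : ℕ) (hk : 1 ≤ k) :
    (a - b) * ∑ j ∈ Finset.Ico 1 k, a ^ j * b ^ (k - j) = a ^ k * b - a * b ^ k := by
  induction k, hk using Nat.le_induction with
  | base => simp
  | succ n hn ih =>
    have hS : ∑ j ∈ Finset.Ico 1 n, a ^ j * b ^ (n + 1 - j)
        = b * ∑ j ∈ Finset.Ico 1 n, a ^ j * b ^ (n - j) := by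
      rw [Finset.mul_sum]
      refine Finset.sum_congr rfl fun j hj => ?_
      rw [Nat.sub_add_comm (Finset.mem_Ico.mp hj).2.le, pow_succ]
      ring
    rw [Finset.sum_Ico_succ_top hn, hS, Nat.add_sub_cancel_left]
    linear_combination b * ih

/-- The identity `cot ((x - y) / 2) = i (a + b) / (a - b)` for `a = e^{ix}`, `b = e^{iy}`,
cleared of its denominator. -/
theorem cot_half_sub_mul (x y : ℝ)
    (h : Complex.exp (Complex.I * (x : ℂ)) ≠ Complex.exp (Complex.I * (y : ℂ))) :
    (Real.cot ((x - y) / 2) : ℂ) *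
        (Complex.exp (Complex.I * (x : ℂ)) - Complex.exp (Complex.I * (y : ℂ)))
      = Complex.I *
        (Complex.exp (Complex.I * (x : ℂ)) + Complex.exp (Complex.I * (y : ℂ))) := by
  have hb := Complex.exp_ne_zero (Complex.I * (y : ℂ))
  have hq : Complex.exp (2 * Complex.I * (((x : ℂ) - y) / 2))
      = Complex.exp (Complex.I * (x : ℂ)) / Complex.exp (Complex.I * (y : ℂ)) := by
    rw [← Complex.exp_sub]
    congr 1
    ring
  rw [Complex.ofReal_cot]
  push_cast
  rw [Complex.cot_eq_exp_ratio, hq]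
  generalize Complex.exp (Complex.I * (x : ℂ)) = a at *
  generalize Complex.exp (Complex.I * (y : ℂ)) = b at *
  have hba : b - a ≠ 0 := sub_ne_zero.mpr h.symm
  have hden : 1 - a / b = (b - a) / b := by field_simp
  rw [hden]
  field_simp
  rw [Complex.I_sq]
  ring

/-- For `k ≥ 1` and `e^{ix} ≠ e^{iy}`,
`cot((x-y)/2)(e^{ikx} - e^{iky}) = i(e^{ikx} + e^{iky} + 2 ∑_{j=1}^{k-1} e^{i(jx + (k-j)y)})`. -/
theorem cot_mul_exp_diff (k : ℕ) (hk : 1 ≤ k) (x y : ℝ)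
    (h : Complex.exp (Complex.I * (x : ℂ)) ≠ Complex.exp (Complex.I * (y : ℂ))) :
    ((Real.cot ((x - y) / 2) : ℂ)) *
        (Complex.exp (Complex.I * (k : ℂ) * (x : ℂ)) -
          Complex.exp (Complex.I * (k : ℂ) * (y : ℂ)))
      = Complex.I * (Complex.exp (Complex.I * (k : ℂ) * (x : ℂ)) +
          Complex.exp (Complex.I * (k : ℂ) * (y : ℂ)) +
          2 * ∑ j ∈ Finset.Ico 1 k,
            Complex.exp (Complex.I * ((j : ℂ) * (x : ℂ) + ((k : ℂ) - (j : ℂ)) * (y : ℂ)))) := by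
  have hpow (n : ℕ) (z : ℝ) : Complex.exp (Complex.I * (n : ℂ) * (z : ℂ))
      = Complex.exp (Complex.I * (z : ℂ)) ^ n := by
    rw [← Complex.exp_nat_mul]
    congr 1
    ring
  have hsum : ∑ j ∈ Finset.Ico 1 k,
        Complex.exp (Complex.I * ((j : ℂ) * (x : ℂ) + ((k : ℂ) - (j : ℂ)) * (y : ℂ)))
      = ∑ j ∈ Finset.Ico 1 k, Complex.exp (Complex.I * (x : ℂ)) ^ j *
          Complex.exp (Complex.I * (y : ℂ)) ^ (k - j) := by
    refine Finset.sum_congr rfl fun j hj => ?_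
    rw [← hpow, ← hpow, ← Complex.exp_add, Nat.cast_sub (Finset.mem_Ico.mp hj).2.le]
    congr 1
    ring
  have hcot := cot_half_sub_mul x y h
  have htel := sub_mul_sum_Ico (Complex.exp (Complex.I * (x : ℂ)))
    (Complex.exp (Complex.I * (y : ℂ))) k hk
  rw [hsum, hpow, hpow]
  refine mul_left_cancel₀ (sub_ne_zero.mpr h) ?_
  linear_combination (Complex.exp (Complex.I * (x : ℂ)) ^ k -
    Complex.exp (Complex.I * (y : ℂ)) ^ k) * hcot - 2 * Complex.I * htel
end
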